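/- Let B be a finite simple (basic) graph with at least two vertices that has no isolated vertices and no universal vertices (a 'peeled' graph). Suppose there exist a 2-coloring c : V → {black, white} and a witness function w : V → V with w(x) ≠ x for all x, such that whenever {x, w(x)} is an edge then c(x) = white and c(w(x)) = black, and whenever {x, w(x)} is not an edge then c(x) = black and c(w(x)) = white. Then there also exist such a coloring and witness function in which the number of black vertices is at least ⌊n/2⌋, where n = |V|. -/

import Mathlib

/-- `W` is the white set of a saturating coloring. -/
def GoodW {V : Type*} (G : SimpleGraph V) (W : Finset V) : Prop :=
  (∀ x ∈ W, ∃ y, y ∉ W ∧ G.Adj x y) ∧ (∀ x, x ∉ W → ∃ y ∈ W, ¬ G.Adj x y)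

set_option maxHeartbeats 1000000 in
theorem goodW_small {V : Type*} [Fintype V] [DecidableEq V] (G : SimpleGraph V)
    (hiso : ∀ v : V, ∃ u : V, G.Adj v u)
    (huni : ∀ v : V, ∃ u : V, u ≠ v ∧ ¬ G.Adj v u)
    (W : Finset V) (hW : GoodW G W)
    (hmin : ∀ W' : Finset V, GoodW G W' → W.card ≤ W'.card) :
    W.card ≤ Wᶜ.card + 1 := by
  classical
  by_contra hbig
  push Not at hbig
  obtain ⟨hW1, hW2⟩ := hW
  set P : Finset V := W.filter
    (fun p => ∃ b, b ∉ W ∧ ¬ G.Adj b p ∧ ∀ y ∈ W, y ≠ p → G.Adj b y) with hP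
  set A : Finset V := W \ P with hA
  set D : Finset V := Wᶜ.filter (fun b => ∃ a ∈ A, ¬ G.Adj b a) with hD
  have memP : ∀ p, p ∈ P ↔ p ∈ W ∧
      ∃ b, b ∉ W ∧ ¬ G.Adj b p ∧ ∀ y ∈ W, y ≠ p → G.Adj b y := by
    intro p; simp [hP]
  have memA : ∀ a, a ∈ A ↔ a ∈ W ∧ a ∉ P := by intro a; simp [hA]
  have memD : ∀ b, b ∈ D ↔ b ∉ W ∧ ∃ a ∈ A, ¬ G.Adj b a := by intro b; simp [hD]
  have PW : ∀ p ∈ P, p ∈ W := fun p hp => ((memP p).1 hp).1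
  have AW : ∀ p ∈ A, p ∈ W := fun p hp => ((memA p).1 hp).1
  have AP : ∀ p ∈ A, p ∉ P := fun p hp => ((memA p).1 hp).2
  have DW : ∀ p ∈ D, p ∉ W := fun p hp => ((memD p).1 hp).1
  clear_value P A D
  have key : ∀ a ∈ A, ∀ y ∈ W, y ≠ a → G.Adj a y := by
    intro a ha
    by_contra hcon
    push Not at hcon
    obtain ⟨y, hyW, hya, hnadj⟩ := hcon
    have hg : GoodW G (W.erase a) := by
      constructor
      · intro x hx
        obtain ⟨z, hz, hxz⟩ := hW1 x (Finset.mem_of_mem_erase hx)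
        exact ⟨z, fun h => hz (Finset.mem_of_mem_erase h), hxz⟩
      · intro x hx
        by_cases hxa : x = a
        · exact ⟨y, Finset.mem_erase.2 ⟨hya, hyW⟩, hxa ▸ hnadj⟩
        · have hxW : x ∉ W := fun h => hx (Finset.mem_erase.2 ⟨hxa, h⟩)
          by_contra hc
          push Not at hc
          have hc' : ∀ y ∈ W, y ≠ a → G.Adj x y :=
            fun y hy hne => hc y (Finset.mem_erase.2 ⟨hne, hy⟩)
          obtain ⟨z, hz, hxz⟩ := hW2 x hxW
          have hza : z = a := by
            by_contra hne
            exact hxz (hc' z hz hne)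
          subst hza
          exact AP z ha ((memP z).2 ⟨hz, x, hxW, hxz, hc'⟩)
    have h1 := hmin _ hg
    have h2 := Finset.card_erase_lt_of_mem (AW a ha)
    omega
  -- private black vertices
  have hf : ∀ p : V, ∃ b, p ∈ P → b ∉ W ∧ ¬ G.Adj b p ∧ ∀ y ∈ W, y ≠ p → G.Adj b y := by
    intro p
    by_cases hp : p ∈ P
    · obtain ⟨b, hb⟩ := ((memP p).1 hp).2
      exact ⟨b, fun _ => hb⟩
    · exact ⟨p, fun h => absurd h hp⟩
  choose f hf using hf
  have hfD : ∀ p ∈ P, f p ∉ D := by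
    intro p hp hd
    obtain ⟨-, a, ha, hna⟩ := (memD _).1 hd
    exact hna ((hf p hp).2.2 a (AW a ha) (fun h => AP a ha (h ▸ hp)))
  have hcardPD : P.card + D.card ≤ Wᶜ.card := by
    have h1 : P.card ≤ (Wᶜ \ D).card := by
      apply Finset.card_le_card_of_injOn f
      · intro p hp
        have hp' : p ∈ P := hp
        have q1 := hfD p hp'
        have q2 := (hf p hp').1
        simp [q1, q2]
      · intro p hp q hq hpq
        by_contra hne
        exact (hf q hq).2.1 (hpq ▸ (hf p hp).2.2 q (PW q hq) (Ne.symm hne))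
    have h2 : D ⊆ Wᶜ := by
      intro x hx
      simpa using DW x hx
    have := Finset.card_sdiff_add_card_eq_card h2
    omega
  have hcardW : A.card + P.card = W.card := by
    rw [hA]; exact Finset.card_sdiff_add_card_eq_card PW
  have hAD : D.card + 2 ≤ A.card := by omega
  have hBD : ∀ x, x ∉ W → x ∉ D → ∃ y ∈ P, ¬ G.Adj x y := by
    intro x hx hxD
    obtain ⟨y, hy, hxy⟩ := hW2 x hx
    refine ⟨y, ?_, hxy⟩
    by_contra hyP
    exact hxD ((memD x).2 ⟨hx, y, (memA y).2 ⟨hy, hyP⟩, hxy⟩)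
  have hAn : ∀ a ∈ A, ∃ u ∈ D, ¬ G.Adj a u := by
    intro a ha
    obtain ⟨u, hu, hau⟩ := huni a
    refine ⟨u, (memD u).2 ⟨fun h => hau (key a ha u h hu), a, ha, fun h => hau h.symm⟩, hau⟩
  by_cases hopt : ∀ d ∈ D, ∃ y, y ∉ P ∪ D ∧ G.Adj d y
  · have hg : GoodW G (P ∪ D) := by
      constructor
      · intro x hx
        rcases Finset.mem_union.1 hx with hx | hx
        · obtain ⟨a, ha⟩ : A.Nonempty := Finset.card_pos.1 (by omega)
          refine ⟨a, ?_, (key a ha x (PW x hx) (fun h => AP a ha (h ▸ hx))).symm⟩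
          intro h
          rcases Finset.mem_union.1 h with h | h
          · exact AP a ha h
          · exact DW a h (AW a ha)
        · exact hopt x hx
      · intro x hx
        rw [Finset.mem_union, not_or] at hx
        by_cases hxW : x ∈ W
        · obtain ⟨u, hu, hxu⟩ := hAn x ((memA x).2 ⟨hxW, hx.1⟩)
          exact ⟨u, Finset.mem_union_right _ hu, hxu⟩
        · obtain ⟨u, hu, hxu⟩ := hBD x hxW hx.2
          exact ⟨u, Finset.mem_union_left _ hu, hxu⟩
    have h1 := hmin _ hg
    have h2 := Finset.card_union_le P D
    omega
  push Not at hopt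
  obtain ⟨d, hd, hdn⟩ := hopt
  have hdn' : ∀ y, y ∉ P → y ∉ D → ¬ G.Adj y d := by
    intro y h1 h2 h3
    exact hdn y (by simp [h1, h2]) h3.symm
  have hDpos : 0 < D.card := Finset.card_pos.2 ⟨d, hd⟩
  by_cases hx : ∃ x ∈ D, G.Adj d x
  · obtain ⟨x, hxD, hdx⟩ := hx
    have hgx : ∀ b : V, ∃ a, b ∈ D → a ∈ A ∧ ¬ G.Adj b a := by
      intro b
      by_cases hb : b ∈ D
      · obtain ⟨a, ha⟩ := ((memD b).1 hb).2
        exact ⟨a, fun _ => ha⟩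
      · exact ⟨b, fun h => absurd h hb⟩
    choose g hgg using hgx
    set A0 := (D.erase d).image g with hA0
    have hA0c : A0.card ≤ D.card - 1 := by
      rw [← Finset.card_erase_of_mem hd]; exact Finset.card_image_le
    have hA0A : ∀ a ∈ A0, a ∈ A := by
      intro a ha
      obtain ⟨b, hb, rfl⟩ := Finset.mem_image.1 ha
      exact (hgg b (Finset.mem_of_mem_erase hb)).1
    obtain ⟨a', ha', ha'0⟩ : ∃ a ∈ A, a ∉ A0 :=
      Finset.exists_mem_notMem_of_card_lt_card (by omega)
    have ha'n : a' ∉ insert d (P ∪ A0) := by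
      simp only [Finset.mem_insert, Finset.mem_union, not_or]
      exact ⟨fun h => DW d hd (h ▸ AW a' ha'), AP a' ha', ha'0⟩
    have hg : GoodW G (insert d (P ∪ A0)) := by
      constructor
      · intro y hy
        simp only [Finset.mem_insert, Finset.mem_union] at hy
        rcases hy with hy | hy | hy
        · refine ⟨x, ?_, hy ▸ hdx⟩
          simp only [Finset.mem_insert, Finset.mem_union, not_or]
          exact ⟨hdx.ne', fun h => DW x hxD (PW x h), fun h => DW x hxD (AW x (hA0A x h))⟩
        · exact ⟨a', ha'n, (key a' ha' y (PW y hy) (fun h => AP a' ha' (h ▸ hy))).symm⟩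
        · exact ⟨a', ha'n,
            (key a' ha' y (AW y (hA0A y hy)) (fun h => ha'0 (h ▸ hy))).symm⟩
      · intro y hy
        simp only [Finset.mem_insert, Finset.mem_union, not_or] at hy
        obtain ⟨hyd, hyP, hyA⟩ := hy
        by_cases hyD : y ∈ D
        · exact ⟨g y, by simp [hA0]; exact Or.inr (Or.inr ⟨y, ⟨hyd, hyD⟩, rfl⟩),
            (hgg y hyD).2⟩
        · exact ⟨d, by simp, hdn' y hyP hyD⟩
    have h1 := hmin _ hg
    have h2 := Finset.card_union_le P A0
    have h3 := Finset.card_insert_le d (P ∪ A0)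
    omega
  push Not at hx
  obtain ⟨p, hdp⟩ := hiso d
  have hpP : p ∈ P := by
    by_contra h
    exact hdn' p h (fun h' => hx p h' hdp) hdp.symm
  obtain ⟨hb1, hb2, hb3⟩ := hf p hpP
  have hbD := hfD p hpP
  set b := f p
  obtain ⟨a, ha⟩ : A.Nonempty := Finset.card_pos.1 (by omega)
  have hap : a ≠ p := fun h => AP a ha (h ▸ hpP)
  have han : a ∉ insert d (insert b (P.erase p)) := by
    simp only [Finset.mem_insert, Finset.mem_erase, not_or, not_and]
    exact ⟨fun h => DW d hd (h ▸ AW a ha), fun h => hb1 (h ▸ AW a ha), fun _ => AP a ha⟩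
  have hg : GoodW G (insert d (insert b (P.erase p))) := by
    constructor
    · intro y hy
      simp only [Finset.mem_insert, Finset.mem_erase] at hy
      rcases hy with hy | hy | hy
      · refine ⟨p, ?_, hy ▸ hdp⟩
        simp only [Finset.mem_insert, Finset.mem_erase, not_or, not_and]
        exact ⟨hdp.ne', fun h => hb1 (h ▸ PW p hpP), fun h => absurd rfl h⟩
      · exact ⟨a, han, hy ▸ hb3 a (AW a ha) hap⟩
      · exact ⟨a, han, (key a ha y (PW y hy.2) (fun h => AP a ha (h ▸ hy.2))).symm⟩
    · intro y hy
      simp only [Finset.mem_insert, Finset.mem_erase, not_or, not_and] at hy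
      obtain ⟨hyd, hyb, hyP⟩ := hy
      by_cases hyp : y = p
      · exact ⟨b, by simp, fun h => hb2 (hyp ▸ h.symm)⟩
      · refine ⟨d, by simp, ?_⟩
        by_cases hyD : y ∈ D
        · exact fun h => hx y hyD h.symm
        · exact hdn' y (hyP hyp) hyD
  have h1 := hmin _ hg
  have h2 := Finset.card_insert_le d (insert b (P.erase p))
  have h3 := Finset.card_insert_le b (P.erase p)
  have h4 := Finset.card_erase_add_one hpP
  omega



/-- A peeled graph (no isolated, no universal vertices, ≥ 2 vertices)
that admits a P-saturation (pattern: ⊕ white→black, ⊖ black→white) admits one of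
weight at least ⌊n/2⌋. Black is encoded as `true`. -/
theorem stmt_0 {V : Type*} [Fintype V] [DecidableEq V] (G : SimpleGraph V)
    [DecidableRel G.Adj]
    (hcard : 2 ≤ Fintype.card V)
    (h_no_isolated : ∀ v : V, ∃ u : V, G.Adj v u)
    (h_no_universal : ∀ v : V, ∃ u : V, u ≠ v ∧ ¬ G.Adj v u)
    (h_sat : ∃ (c : V → Bool) (w : V → V), (∀ x, w x ≠ x) ∧
      (∀ x, (G.Adj x (w x) → c x = false ∧ c (w x) = true) ∧
            (¬ G.Adj x (w x) → c x = true ∧ c (w x) = false))) :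
    ∃ (c : V → Bool) (w : V → V), (∀ x, w x ≠ x) ∧
      (∀ x, (G.Adj x (w x) → c x = false ∧ c (w x) = true) ∧
            (¬ G.Adj x (w x) → c x = true ∧ c (w x) = false)) ∧
      Fintype.card V / 2 ≤ (Finset.univ.filter (fun v => c v = true)).card := by
  
  classical
  obtain ⟨c₀, w₀, hw₀, h₀⟩ := h_sat
  have hex : ∃ W : Finset V, GoodW G W := by
    refine ⟨Finset.univ.filter (fun v => c₀ v = false), ?_, ?_⟩
    · intro x hx
      have hx' : c₀ x = false := by simpa using hx
      by_cases hadj : G.Adj x (w₀ x)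
      · exact ⟨w₀ x, by simp [((h₀ x).1 hadj).2], hadj⟩
      · have := ((h₀ x).2 hadj).1
        simp [hx'] at this
    · intro x hx
      have hx' : c₀ x = true := by simpa using hx
      by_cases hadj : G.Adj x (w₀ x)
      · have := ((h₀ x).1 hadj).1
        simp [hx'] at this
      · exact ⟨w₀ x, by simp [((h₀ x).2 hadj).2], hadj⟩
  obtain ⟨W, hW, hmin⟩ : ∃ W : Finset V, GoodW G W ∧
      ∀ W' : Finset V, GoodW G W' → W.card ≤ W'.card := by
    obtain ⟨W0, hW0⟩ := hex
    obtain ⟨W, hW, hm⟩ := Finset.exists_min_image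
      (Finset.univ.filter (fun W : Finset V => GoodW G W)) Finset.card ⟨W0, by simp [hW0]⟩
    exact ⟨W, by simpa using hW, fun W' hW' => hm W' (by simp [hW'])⟩
  have hsmall := goodW_small G h_no_isolated h_no_universal W hW hmin
  have hw : ∀ x, ∃ y, y ≠ x ∧ ((x ∈ W ∧ y ∉ W ∧ G.Adj x y) ∨
      (x ∉ W ∧ y ∈ W ∧ ¬ G.Adj x y)) := by
    intro x
    by_cases hx : x ∈ W
    · obtain ⟨y, hy, hxy⟩ := hW.1 x hx
      exact ⟨y, hxy.ne', Or.inl ⟨hx, hy, hxy⟩⟩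
    · obtain ⟨y, hy, hxy⟩ := hW.2 x hx
      exact ⟨y, fun h => hx (h ▸ hy), Or.inr ⟨hx, hy, hxy⟩⟩
  choose w hw1 hw2 using hw
  refine ⟨fun v => decide (v ∉ W), w, hw1, ?_, ?_⟩
  · intro x
    rcases hw2 x with ⟨h1, h2, h3⟩ | ⟨h1, h2, h3⟩ <;> simp [h1, h2, h3]
  · have e : (Finset.univ.filter (fun v => decide (v ∉ W) = true)) = Wᶜ := by
      ext v; simp
    rw [e]
    have := Finset.card_add_card_compl W
    omega
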